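/- Let (G,I,O) be an open graph with focused gFlow (g,≺), let u ∉ I ∪ O, and let w ∈ V ∖ (O ∪ {u}). Then Odd_{G⋆u}(g(w)) ∩ (V ∖ (O ∪ {u})) = {w} Δ R_w, where R_w := N_G(u) ∩ g(w) ∩ (V ∖ O). -/

import Mathlib

/-!
Local complementation at `u` changes only the neighbourhoods of the neighbours `v` of `u`,
replacing `N(v)` by `N(v) ∆ N(u) ∆ {v}`. Intersecting with `A` and taking cardinalities modulo 2,
the term `N(u)` contributes nothing if `u ∉ Odd(A)`, so `Odd(A)` changes exactly at the neighbours
of `u` that lie in `A`. For a focused gFlow, `u ∉ Odd(g(w))` because the only non-output in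
`Odd(g(w))` is `w`.
-/

open Finset symmDiff

variable {V : Type*}

/-- The neighbourhood of a vertex as a `Finset`. -/
def nbhd [Fintype V] [DecidableEq V] (G : SimpleGraph V) [DecidableRel G.Adj] (v : V) :
    Finset V :=
  Finset.univ.filter (G.Adj v)

/-- The odd neighbourhood of a set of vertices: all vertices with an odd number of
neighbours in `A`. -/
def oddNbhd [Fintype V] [DecidableEq V] (G : SimpleGraph V) [DecidableRel G.Adj]
    (A : Finset V) : Finset V :=
  Finset.univ.filter fun w => Odd (A.filter (G.Adj w)).card

/-- Local complementation of `G` at the vertex `u`. -/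
def localComp (G : SimpleGraph V) (u : V) : SimpleGraph V where
  Adj v w := v ≠ w ∧ Xor' (G.Adj v w) (G.Adj u v ∧ G.Adj u w)
  symm := by
    constructor
    rintro v w ⟨h1, h2⟩
    exact ⟨h1.symm, by rwa [G.adj_comm v w, and_comm] at h2⟩
  loopless := by constructor; rintro v ⟨h, -⟩; exact h rfl

instance {a b : Prop} [Decidable a] [Decidable b] : Decidable (Xor' a b) :=
  inferInstanceAs (Decidable ((a ∧ ¬b) ∨ (b ∧ ¬a)))

instance [DecidableEq V] (G : SimpleGraph V) [DecidableRel G.Adj] (u : V) :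
    DecidableRel (localComp G u).Adj :=
  fun v w => inferInstanceAs (Decidable (v ≠ w ∧ Xor' (G.Adj v w) (G.Adj u v ∧ G.Adj u w)))

/-- The pivot of `G` along the edge `uv`. -/
def pivot (G : SimpleGraph V) (u v : V) : SimpleGraph V :=
  localComp (localComp (localComp G u) v) u

instance [DecidableEq V] (G : SimpleGraph V) [DecidableRel G.Adj] (u v : V) :
    DecidableRel (pivot G u v).Adj :=
  inferInstanceAs (DecidableRel (localComp (localComp (localComp G u) v) u).Adj)

instance {α β : Type*} (G : SimpleGraph β) [DecidableRel G.Adj] (f : α → β) :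
    DecidableRel (G.comap f).Adj :=
  fun a b => inferInstanceAs (Decidable (G.Adj (f a) (f b)))

/-- `(g, r)` is a focused gFlow on the open graph `(G, I, O)`: `r` is a strict partial
order, each correction set `g u` (for `u ∉ O`) avoids the inputs, its odd neighbourhood
meets the non-outputs exactly in `{u}`, and `g u` lies strictly in the future of `u`. -/
def IsFocusedGFlow [Fintype V] [DecidableEq V] (G : SimpleGraph V) [DecidableRel G.Adj]
    (I O : Finset V) (g : V → Finset V) (r : V → V → Prop) : Prop :=
  (∀ a, ¬ r a a) ∧ (∀ a b c, r a b → r b c → r a c) ∧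
    ∀ u ∉ O, g u ∩ I = ∅ ∧ oddNbhd G (g u) \ O = {u} ∧ ∀ v ∈ g u, r u v

/-- The open graph `(G, I, O)` admits a focused gFlow. -/
def HasFocusedGFlow [Fintype V] [DecidableEq V] (G : SimpleGraph V) [DecidableRel G.Adj]
    (I O : Finset V) : Prop :=
  ∃ g r, IsFocusedGFlow G I O g r

theorem odd_card_symmDiff {α : Type*} [DecidableEq α] (s t : Finset α) :
    Odd #(s ∆ t) ↔ (Odd #s ↔ Even #t) := by
  have card_add : #(s ∆ t) + 2 * #(s ∩ t) = #s + #t := by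
    rw [symmDiff_def, sup_eq_union, card_union_of_disjoint disjoint_sdiff_sdiff,
      ← card_sdiff_add_card_inter s t, ← card_sdiff_add_card_inter t s, inter_comm t s]
    ring
  rw [← Nat.odd_add, ← card_add, Nat.odd_add]
  simp

theorem localComp_adj (G : SimpleGraph V) {u v x : V} :
    (localComp G u).Adj v x ↔ v ≠ x ∧ Xor (G.Adj v x) (G.Adj u v ∧ G.Adj u x) :=
  Iff.rfl

section OddNbhd

variable [Fintype V] [DecidableEq V] (G : SimpleGraph V) [DecidableRel G.Adj]

theorem mem_nbhd {v x : V} : x ∈ nbhd G v ↔ G.Adj v x := by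
  simp [nbhd]

theorem mem_oddNbhd {A : Finset V} {v : V} : v ∈ oddNbhd G A ↔ Odd #(nbhd G v ∩ A) := by
  simp [oddNbhd, nbhd, filter_inter]

theorem nbhd_localComp_of_not_adj {u v : V} (h : ¬G.Adj u v) :
    nbhd (localComp G u) v = nbhd G v := by
  ext x
  simpa [mem_nbhd, localComp_adj, h, xor_def] using G.ne_of_adj

theorem nbhd_localComp_of_adj {u v : V} (h : G.Adj u v) :
    nbhd (localComp G u) v = nbhd G v ∆ (nbhd G u ∆ {v}) := by
  ext x
  obtain rfl | hx := eq_or_ne x v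
  · simp [mem_nbhd, mem_symmDiff, h]
  · simp [mem_nbhd, mem_symmDiff, localComp_adj, xor_def, h, hx, hx.symm]

theorem oddNbhd_localComp {u : V} {A : Finset V} (hu : u ∉ oddNbhd G A) :
    oddNbhd (localComp G u) A = oddNbhd G A ∆ (nbhd G u ∩ A) := by
  have not_odd : ¬Odd #(nbhd G u ∩ A) := by rwa [← mem_oddNbhd]
  ext v
  rw [mem_symmDiff, mem_oddNbhd, mem_oddNbhd, mem_inter, mem_nbhd]
  by_cases huv : G.Adj u v
  · have odd_singleton : Odd #({v} ∩ A) ↔ v ∈ A := by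
      by_cases hv : v ∈ A <;> simp [hv]
    rw [nbhd_localComp_of_adj G huv, ← inf_eq_inter, inf_symmDiff_distrib_right,
      inf_symmDiff_distrib_right]
    simp only [inf_eq_inter, odd_card_symmDiff, ← Nat.not_odd_iff_even, not_odd, odd_singleton]
    tauto
  · simp [nbhd_localComp_of_not_adj G huv, huv]

theorem oddNbhd_localComp_correction_general {O A : Finset V} {u w : V}
    (hA : oddNbhd G A \ O = {w}) (hu : u ∉ O) (huw : u ≠ w) :
    oddNbhd (localComp G u) A \ (O ∪ {u}) = {w} ∆ ((nbhd G u ∩ A) \ O) := by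
  have hu_odd : u ∉ oddNbhd G A := fun h =>
    huw (mem_singleton.mp (hA ▸ mem_sdiff.mpr ⟨h, hu⟩))
  have hu_notMem : u ∉ {w} ∆ ((nbhd G u ∩ A) \ O) := by
    simp [mem_symmDiff, mem_nbhd, huw]
  calc oddNbhd (localComp G u) A \ (O ∪ {u})
    _ = (oddNbhd G A ∆ (nbhd G u ∩ A) \ O) \ {u} := by
      rw [oddNbhd_localComp G hu_odd, ← sup_eq_union, sdiff_sdiff_left]
    _ = ((oddNbhd G A \ O) ∆ ((nbhd G u ∩ A) \ O)) \ {u} := by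
      simp only [sdiff_eq, inf_symmDiff_distrib_right]
    _ = {w} ∆ ((nbhd G u ∩ A) \ O) := by
      rw [hA, sdiff_singleton_eq_erase, erase_eq_of_notMem hu_notMem]

end OddNbhd

theorem oddNbhd_localComp_correction [Fintype V] [DecidableEq V]
    (G : SimpleGraph V) [DecidableRel G.Adj] (I O : Finset V)
    (g : V → Finset V) (r : V → V → Prop) (hg : IsFocusedGFlow G I O g r)
    (u : V) (hu : u ∉ I ∪ O) (w : V) (hw : w ∉ O ∪ {u}) :
    oddNbhd (localComp G u) (g w) \ (O ∪ {u}) =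
      ({w} : Finset V) ∆ ((nbhd G u ∩ g w) \ O) := by
  simp only [mem_union, mem_singleton, not_or] at hu hw
  exact oddNbhd_localComp_correction_general G (hg.2.2 w hw.1).2.1 hu.2 (Ne.symm hw.2)
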